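/- arXiv:1001.4652 — 2 statements merged into one kernel-verified Lean document; each statement's English description precedes it below -/
import Mathlib

section
/- Repelling petals exist at the parabolic fixed point of P_ω: there exist an open connected set V ⊆ ℂ with 0 in its frontier and a holomorphic injective map g : V → ℂ such that g(V) ⊆ V, P_ω^q(g(z)) = z for every z ∈ V (g is a local inverse branch of the q-th iterate P_ω^q), and the backward iterates converge to the fixed point: g^n(z) → 0 as n → ∞ for every z ∈ V. -/
open Complex Filter Topology Set

/-- The quadratic polynomial `P_ω(z) = ω z + z²`. -/
noncomputable def Pq (ω : ℂ) : ℂ → ℂ := fun z => ω * z + z ^ 2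

/-- The augmented parabolic basin `Λ̃_ω`: points whose orbit converges to `0`. -/
def basinAug (ω : ℂ) : Set ℂ := {z | Tendsto (fun n => (Pq ω)^[n] z) atTop (𝓝 0)}

/-- The backward orbit of the parabolic fixed point `0`. -/
def preFixed (ω : ℂ) : Set ℂ := {z | ∃ n : ℕ, (Pq ω)^[n] z = 0}

/-- The parabolic basin `Λ_ω`. -/
def basin (ω : ℂ) : Set ℂ := basinAug ω \ preFixed ω


lemma petal_aux (F g : ℂ → ℂ) (hg : AnalyticAt ℂ g 0) (hg0 : g 0 = 0) (hg1 : HasDerivAt g 1 0)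
    (hFg : ∀ᶠ z in 𝓝 (0:ℂ), F (g z) = z) (hne : ¬ ∀ᶠ z in 𝓝 (0:ℂ), g z - z = 0) :
    ∃ (V : Set ℂ),
      IsOpen V ∧ IsConnected V ∧ (0 : ℂ) ∈ frontier V ∧
      (∀ z ∈ V, DifferentiableAt ℂ g z) ∧
      Set.InjOn g V ∧
      g '' V ⊆ V ∧
      (∀ z ∈ V, F (g z) = z) ∧
      (∀ z ∈ V, Tendsto (fun n => g^[n] z) atTop (𝓝 0)) := by
  have han : AnalyticAt ℂ (fun z => g z - z) 0 := hg.sub analyticAt_id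
  obtain ⟨N, k, hk, hk0, hgk⟩ := han.exists_eventuallyEq_pow_smul_nonzero_iff.mpr hne
  simp only [sub_zero, smul_eq_mul] at hgk
  obtain ⟨m, hm, rfl⟩ : ∃ m, 0 < m ∧ N = m + 1 := by
    rcases N with _ | _ | m
    · exfalso
      have := hgk.self_of_nhds
      simp [hg0] at this
      exact hk0 this.symm
    · exfalso
      have h1 : HasDerivAt (fun z => g z - z) (1 - 1) 0 := hg1.sub (hasDerivAt_id 0)
      have h2 : HasDerivAt (fun z : ℂ => z ^ (0+1) * k z) (1 * k 0 + 0 * deriv k 0) 0 := by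
        have h3 : HasDerivAt (fun z : ℂ => z * k z) (1 * k 0 + 0 * deriv k 0) 0 :=
          (hasDerivAt_id (0:ℂ)).mul hk.differentiableAt.hasDerivAt
        simpa only [zero_add, pow_one] using h3
      have := (h2.congr_of_eventuallyEq hgk).unique h1
      simp at this
      exact hk0 this
    · exact ⟨m + 1, by omega, rfl⟩
  have hm0 : (m : ℂ) ≠ 0 := by exact_mod_cast hm.ne'
  set c : ℂ := -1 / (m * k 0) with hc
  have hc0 : c ≠ 0 := by rw [hc]; simp [hm0, hk0]
  set ψ : ℂ → ℂ := fun u => ((1 + u) ^ m)⁻¹ with hψ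
  have hψd : HasDerivAt ψ (-m) 0 := by
    have h1 : HasDerivAt (fun u : ℂ => (1 + u) ^ m) (m * (1 + 0) ^ (m - 1) * 1) 0 :=
      ((hasDerivAt_id (0:ℂ)).const_add 1).pow m
    have h2 : HasDerivAt ψ (-(m * (1 + 0) ^ (m - 1) * 1) / ((1 + 0) ^ m) ^ 2) 0 :=
      h1.inv (by simp)
    have h3 : -((m:ℂ) * (1 + 0) ^ (m - 1) * 1) / ((1 + 0) ^ m) ^ 2 = -m := by simp
    rwa [h3] at h2
  have hθc : ContinuousAt (dslope ψ 0) 0 := continuousAt_dslope_same.mpr hψd.differentiableAt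
  have hθ0 : dslope ψ 0 0 = -m := by rw [dslope_same, hψd.deriv]
  have hθ : ∀ u, ψ u = 1 + u * dslope ψ 0 u := by
    intro u
    have := sub_smul_dslope ψ 0 u
    have h0 : ψ 0 = 1 := by simp [hψ]
    rw [h0, smul_eq_mul, sub_zero] at this
    rw [this]; ring
  -- joint estimate
  have hjoint : ContinuousAt (fun x : ℂ × ℂ => (c * k x.1 * dslope ψ 0 x.2).re) (0, 0) := by
    have h1 : ContinuousAt (fun x : ℂ × ℂ => k x.1) (0, 0) :=
      ContinuousAt.comp (f := Prod.fst) (x := ((0, 0) : ℂ × ℂ)) hk.continuousAt continuousAt_fst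
    have h2 : ContinuousAt (fun x : ℂ × ℂ => dslope ψ 0 x.2) (0, 0) :=
      ContinuousAt.comp (f := Prod.snd) (x := ((0, 0) : ℂ × ℂ)) hθc continuousAt_snd
    exact Complex.continuous_re.continuousAt.comp ((continuousAt_const.mul h1).mul h2)
  have hval : (c * k 0 * dslope ψ 0 0).re = 1 := by
    rw [hθ0, hc]
    have : -1 / (m * k 0) * k 0 * -(m:ℂ) = 1 := by field_simp
    rw [this]; simp
  have hev : ∀ᶠ x in 𝓝 ((0, 0) : ℂ × ℂ), 1/2 < (c * k x.1 * dslope ψ 0 x.2).re := by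
    apply hjoint.eventually_const_lt
    simp only [hval]; norm_num
  obtain ⟨δ, hδ, hball⟩ := Metric.eventually_nhds_iff.mp hev
  have hsm : ∀ᶠ z in 𝓝 (0:ℂ), ‖z ^ m * k z‖ < min δ 1 := by
    have : ContinuousAt (fun z : ℂ => ‖z ^ m * k z‖) 0 :=
      ((continuousAt_id.pow m).mul hk.continuousAt).norm
    apply this.eventually_lt_const
    simp [hm.ne', hδ]
  obtain ⟨r, hr, hrr⟩ := Metric.eventually_nhds_iff.mp
    ((hsm.and hgk).and (hFg.and (hg.eventually_analyticAt.and
      (Metric.ball_mem_nhds (0:ℂ) hδ))))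
  have hsmall : ∀ (z : ℂ) (t : ℝ), 0 < t → ‖c‖ / t ^ m < (c / z ^ m).re → ‖z‖ < t := by
    intro z t ht h
    by_contra! hcon
    have h1 : (c / z ^ m).re ≤ ‖c‖ / ‖z‖ ^ m := by
      calc _ ≤ ‖c / z ^ m‖ := Complex.re_le_norm _
        _ = _ := by rw [norm_div, norm_pow]
    have h2 : ‖c‖ / ‖z‖ ^ m ≤ ‖c‖ / t ^ m := by gcongr
    linarith
  set R : ℝ := ‖c‖ / r ^ m with hR
  have hRpos : 0 < R := by positivity
  set S : Set ℂ := {z | R < (c / z ^ m).re} with hS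
  have hS0 : ∀ z ∈ S, z ≠ 0 := by
    rintro z hz rfl
    simp [hS, hm.ne'] at hz
    linarith
  have hSopen : IsOpen S := by
    rw [isOpen_iff_mem_nhds]
    intro z hz
    have h1 : ContinuousAt (fun z : ℂ => (c / z ^ m).re) z :=
      Complex.continuous_re.continuousAt.comp
        (continuousAt_const.div (continuousAt_id.pow m) (pow_ne_zero _ (hS0 z hz)))
    exact h1.eventually_const_lt hz
  have hSr : ∀ z ∈ S, dist z 0 < r := fun z hz => by
    rw [dist_zero_right]; exact hsmall z r hr hz
  have hstep : ∀ z ∈ S, ∀ s : ℝ, 0 ≤ s → s ≤ 1 →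
      (c / z ^ m).re + s / 2 ≤ (c / (z + s * (g z - z)) ^ m).re := by
    intro z hz s hs0 hs1
    obtain ⟨⟨h1, h2⟩, -, -, h5⟩ := hrr (hSr z hz)
    have hz0 := hS0 z hz
    set u : ℂ := s * (z ^ m * k z) with hu
    have hus : ‖u‖ < min δ 1 := by
      rw [hu, norm_mul, Complex.norm_real, Real.norm_of_nonneg hs0]
      nlinarith [norm_nonneg (z ^ m * k z)]
    have hb := hball (y := (z, u)) (by
      rw [Prod.dist_eq, max_lt_iff]
      refine ⟨h5, ?_⟩
      simpa using hus.trans_le (min_le_left _ _))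
    simp only at hb
    have e1 : z + s * (g z - z) = z * (1 + u) := by rw [h2, hu]; ring
    have e2 : c / (z * (1 + u)) ^ m = c / z ^ m + s * (c * k z * dslope ψ 0 u) := by
      have : c / (z * (1 + u)) ^ m = c / z ^ m * ψ u := by
        simp only [hψ, mul_pow]; rw [div_mul_eq_div_div, div_eq_mul_inv _ ((1+u)^m)]
      rw [this, hθ u]
      have hzm : z ^ m ≠ 0 := pow_ne_zero _ hz0
      have : c / z ^ m * u = s * (c * k z) := by
        rw [hu]; field_simp
      rw [mul_add, mul_one, ← mul_assoc, this]; ring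
    rw [e1, e2, Complex.add_re, Complex.re_ofReal_mul]
    nlinarith
  have hseg : ∀ z ∈ S, segment ℝ z (g z) ⊆ S := by
    intro z hz y hy
    rw [segment_eq_image'] at hy
    obtain ⟨s, ⟨hs0, hs1⟩, rfl⟩ := hy
    have := hstep z hz s hs0 hs1
    simp only [hS, Set.mem_ofPred_eq, Complex.real_smul] at hz ⊢
    linarith
  have hgS : ∀ z ∈ S, g z ∈ S := fun z hz => hseg z hz (right_mem_segment ℝ _ _)
  have hgn : ∀ z ∈ S, ∀ n : ℕ, g^[n] z ∈ S ∧ R + n / 2 ≤ (c / (g^[n] z) ^ m).re := by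
    intro z hz n
    induction n with
    | zero => exact ⟨hz, by simpa using le_of_lt hz⟩
    | succ n ih =>
      rw [Function.iterate_succ_apply']
      refine ⟨hgS _ ih.1, ?_⟩
      have := hstep _ ih.1 1 zero_le_one le_rfl
      simp only [Complex.ofReal_one, one_mul, add_sub_cancel] at this
      push_cast
      linarith [ih.2]
  have hconv : ∀ z ∈ S, Tendsto (fun n => g^[n] z) atTop (𝓝 0) := by
    intro z hz
    rw [Metric.tendsto_atTop]
    intro ε hε
    obtain ⟨n0, hn0⟩ := exists_nat_gt (2 * (‖c‖ / ε ^ m))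
    refine ⟨n0, fun n hn => ?_⟩
    rw [dist_zero_right]
    apply hsmall _ _ hε
    have h1 := (hgn z hz n).2
    have h2 : (n0 : ℝ) ≤ n := by exact_mod_cast hn
    linarith
  obtain ⟨x0, hx0⟩ : ∃ x0, x0 ∈ S := by
    obtain ⟨x, hx⟩ := IsAlgClosed.exists_pow_nat_eq (c / ((R + 1 : ℝ) : ℂ)) hm
    refine ⟨x, ?_⟩
    have : c / x ^ m = ((R + 1 : ℝ) : ℂ) := by rw [hx]; field_simp
    simp only [hS, Set.mem_ofPred_eq, this, Complex.ofReal_re]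
    linarith
  set V := connectedComponentIn S x0 with hV
  have hVS : V ⊆ S := connectedComponentIn_subset _ _
  have hgV : ∀ z ∈ V, g z ∈ V := by
    intro z hz
    rw [hV, connectedComponentIn_eq hz]
    exact (convex_segment z (g z)).isPreconnected.subset_connectedComponentIn
      (left_mem_segment ℝ _ _) (hseg z (hVS hz)) (right_mem_segment ℝ _ _)
  have hVo : IsOpen V := hSopen.connectedComponentIn
  have hinv : ∀ z ∈ V, F (g z) = z := fun z hz => (hrr (hSr z (hVS hz))).2.1
  have hxV : x0 ∈ V := mem_connectedComponentIn hx0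
  refine ⟨V, hVo, isConnected_connectedComponentIn_iff.mpr hx0, ?_, ?_, ?_, ?_, hinv,
    fun z hz => hconv z (hVS hz)⟩
  · rw [hVo.frontier_eq]
    refine ⟨mem_closure_of_tendsto (hconv x0 hx0) (Eventually.of_forall fun n => ?_),
      fun h => hS0 0 (hVS h) rfl⟩
    induction n with
    | zero => exact hxV
    | succ n ih => rw [Function.iterate_succ_apply']; exact hgV _ ih
  · exact fun z hz => (hrr (hSr z (hVS hz))).2.2.1.differentiableAt
  · intro a ha b hb hab
    rw [← hinv a ha, ← hinv b hb, hab]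
  · rintro _ ⟨z, hz, rfl⟩
    exact hgV z hz

/-- Repelling petals exist at the parabolic fixed point of
`P_ω`: there are an open connected set `V` with `0` on its frontier and a
holomorphic injective map `g : V → ℂ` with `g(V) ⊆ V` which is an inverse
branch of `P_ω^[q]` on `V`, whose backward iterates converge to `0`. -/
theorem repelling_petal_exists
    (p q : ℕ) (hq : 2 ≤ q) (hp0 : 0 < p) (hpq : p < q) (hcop : Nat.Coprime p q)
    (ω : ℂ) (hω : ω = Complex.exp (2 * Real.pi * Complex.I * (p : ℂ) / (q : ℂ))) :
    ∃ (V : Set ℂ) (g : ℂ → ℂ),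
      IsOpen V ∧ IsConnected V ∧ (0 : ℂ) ∈ frontier V ∧
      (∀ z ∈ V, DifferentiableAt ℂ g z) ∧
      Set.InjOn g V ∧
      g '' V ⊆ V ∧
      (∀ z ∈ V, (Pq ω)^[q] (g z) = z) ∧
      (∀ z ∈ V, Tendsto (fun n => g^[n] z) atTop (𝓝 0)) := by
  have hq0 : (q : ℂ) ≠ 0 := by exact_mod_cast (by omega : q ≠ 0)
  have hω0 : ω ≠ 0 := by rw [hω]; exact Complex.exp_ne_zero _
  have hωq : ω ^ q = 1 := by
    rw [hω, ← Complex.exp_nat_mul, Complex.exp_eq_one_iff]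
    refine ⟨p, ?_⟩
    push_cast
    field_simp
  have hPd : Differentiable ℂ (Pq ω) := by unfold Pq; fun_prop
  have hFd : Differentiable ℂ (Pq ω)^[q] := hPd.iterate q
  have hFan : ∀ z, AnalyticAt ℂ (Pq ω)^[q] z := fun z => hFd.analyticAt z
  have hP0 : Pq ω 0 = 0 := by simp [Pq]
  have hF0 : (Pq ω)^[q] 0 = 0 := Function.iterate_fixed hP0 q
  have hP1 : HasDerivAt (Pq ω) ω 0 := by
    have := ((hasDerivAt_id (0:ℂ)).const_mul ω).add ((hasDerivAt_id (0:ℂ)).pow 2)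
    have h2 : HasDerivAt (Pq ω) (ω * 1 + (2:ℕ) * (0:ℂ) ^ (2 - 1) * 1) 0 := this
    simpa using h2
  have hF1 : deriv (Pq ω)^[q] 0 = 1 := by
    rw [(HasDerivAt.iterate (0:ℂ) hP1 hP0 q).deriv, hωq]
  have hF1' : deriv (Pq ω)^[q] 0 ≠ 0 := by rw [hF1]; exact one_ne_zero
  have hs := (hFan 0).hasStrictDerivAt
  set g := hs.localInverse _ _ _ hF1' with hg
  have hga : AnalyticAt ℂ g ((Pq ω)^[q] 0) := (hFan 0).analyticAt_localInverse hF1'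
  have hg1 := (hs.to_localInverse hF1').hasDerivAt
  have hg0 : g ((Pq ω)^[q] 0) = 0 := (hs.eventually_left_inverse hF1').self_of_nhds
  have hr := hs.eventually_right_inverse hF1'
  have hl := hs.eventually_left_inverse hF1'
  rw [← hg] at hg1 hr hl
  rw [hF1, inv_one] at hg1
  rw [hF0] at hga hg1 hg0 hr
  obtain ⟨V, h⟩ := petal_aux (Pq ω)^[q] g hga hg0 hg1 hr (by
    intro hid
    have h1 : (Pq ω)^[q] =ᶠ[𝓝 0] id := by
      filter_upwards [hid, hr] with z h1 h2
      rw [sub_eq_zero.mp h1] at h2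
      exact h2
    have h2 : (Pq ω)^[q] = id :=
      AnalyticOnNhd.eq_of_eventuallyEq (fun z _ => hFan z) (fun z _ => analyticAt_id) h1
    have h3 : Pq ω (-ω) = 0 := by simp [Pq]; ring
    have h4 : (Pq ω)^[q] (-ω) = 0 := by
      obtain ⟨j, rfl⟩ : ∃ j, q = j + 1 := ⟨q - 1, by omega⟩
      rw [Function.iterate_succ_apply, h3]
      exact Function.iterate_fixed hP0 j
    rw [h2] at h4
    exact hω0 (by simpa using h4))
  exact ⟨V, g, h⟩
end

section
/- Petals absorb all orbits in the parabolic basin: let φ : Λ_ω → ℂ be an extended Fatou coordinate for P_ω (holomorphic, surjective, with φ(P_ω(z)) = 1/q + φ(z) and φ(−ω/2) = 0) and for δ ∈ ℝ let W_δ = φ^{−1}({x + iy : x > δ}). Then for every z ∈ Λ_ω and every δ ∈ ℝ there exists N ≥ 0 such that P_ω^n(z) ∈ W_δ for all n ≥ qN. -/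
open Complex Filter Topology Set

/-- Petals absorb all orbits in the parabolic basin: given an
extended Fatou coordinate `φ` for `P_ω` and, for `δ ∈ ℝ`, the petal region
`W_δ = φ⁻¹({x + iy : x > δ})` (inside the basin), every orbit in `Λ_ω`
eventually enters `W_δ`: there is `N` with `P_ω^[n] z ∈ W_δ` for all `n ≥ qN`. -/
theorem petals_absorb_orbits
    (p q : ℕ) (hq : 2 ≤ q) (hp0 : 0 < p) (hpq : p < q) (hcop : Nat.Coprime p q)
    (ω : ℂ) (hω : ω = Complex.exp (2 * Real.pi * Complex.I * (p : ℂ) / (q : ℂ)))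
    (φ : ℂ → ℂ)
    (hφdiff : ∀ z ∈ basin ω, DifferentiableAt ℂ φ z)
    (hφsurj : ∀ w : ℂ, ∃ z ∈ basin ω, φ z = w)
    (hφeq : ∀ z ∈ basin ω, φ (Pq ω z) = 1 / (q : ℂ) + φ z)
    (hφnorm : φ (-ω / 2) = 0) :
    ∀ z ∈ basin ω, ∀ δ : ℝ, ∃ N : ℕ, ∀ n : ℕ, q * N ≤ n →
      (Pq ω)^[n] z ∈ {w ∈ basin ω | δ < (φ w).re} := by
  intro z hz δ
  have hb : ∀ n : ℕ, (Pq ω)^[n] z ∈ basin ω := by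
    intro n
    refine ⟨?_, ?_⟩
    · have h := (tendsto_add_atTop_iff_nat n).2 hz.1
      show Tendsto (fun m => (Pq ω)^[m] ((Pq ω)^[n] z)) atTop (𝓝 0)
      simpa only [Function.iterate_add_apply] using h
    · rintro ⟨m, hm⟩
      exact hz.2 ⟨m + n, by rw [Function.iterate_add_apply]; exact hm⟩
  have hre : ∀ n : ℕ, (φ ((Pq ω)^[n] z)).re = (n : ℝ) / q + (φ z).re := by
    intro n
    induction n with
    | zero => simp
    | succ k ih =>
      rw [Function.iterate_succ_apply', hφeq _ (hb k), Complex.add_re, ih]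
      have h1 : (1 / (q : ℂ)).re = 1 / (q : ℝ) := by
        rw [← Complex.ofReal_re (1 / (q : ℝ))]
        push_cast
        rfl
      rw [h1]
      push_cast
      ring
  obtain ⟨N, hN⟩ := exists_nat_gt (δ - (φ z).re)
  refine ⟨N, fun n hn => ⟨hb n, ?_⟩⟩
  rw [hre]
  have hq0 : (0 : ℝ) < q := by
    exact_mod_cast (by omega : 0 < q)
  have h2 : (N : ℝ) ≤ (n : ℝ) / q := by
    rw [le_div_iff₀ hq0, mul_comm]
    exact_mod_cast hn
  linarith
end
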